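/- Let G be a subgroup of A × B and let N = S_A × S_B where S_A = {(a,1) ∈ G} and S_B = {(1,b) ∈ G}. Then the map φ : G → (G_A/N_A) × (G_B/N_B) sending (a,b) to ([a],[b]) induces an isomorphism of G/N onto its image H = {([a],[b]) : (a,b) ∈ G}. -/

import Mathlib

/-- The natural map `φ : G → (G_A/N_A) × (G_B/N_B)`, `(a,b) ↦ ([a],[b])`,
for subgroups `N ≤ G ≤ A × B`. -/
def goursatMap {A B : Type*} [Group A] [Group B] (G N : Subgroup (A × B))
    [((N.map (MonoidHom.fst A B)).subgroupOf (G.map (MonoidHom.fst A B))).Normal]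
    [((N.map (MonoidHom.snd A B)).subgroupOf (G.map (MonoidHom.snd A B))).Normal] :
    ↥G →*
      (↥(G.map (MonoidHom.fst A B)) ⧸
        (N.map (MonoidHom.fst A B)).subgroupOf (G.map (MonoidHom.fst A B))) ×
      (↥(G.map (MonoidHom.snd A B)) ⧸
        (N.map (MonoidHom.snd A B)).subgroupOf (G.map (MonoidHom.snd A B))) :=
  ((QuotientGroup.mk' _).comp ((MonoidHom.fst A B).subgroupMap G)).prod
    ((QuotientGroup.mk' _).comp ((MonoidHom.snd A B).subgroupMap G))

/-!
The kernel of `φ` is always the box `N_A × N_B` spanned by the two projections of `N`, cut down to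
`G`. A product subgroup `S × T` is the box spanned by its own projections, so for such an `N` the
kernel is `N` itself and the first isomorphism theorem applies. Here `S_A` and `S_B` are Mathlib's
`Subgroup.goursatFst` and `Subgroup.goursatSnd`.
-/

section ProductSubgroups

variable {A B : Type*} [Group A] [Group B]

theorem map_fst_subgroup_prod (S : Subgroup A) (T : Subgroup B) :
    (S.prod T).map (MonoidHom.fst A B) = S := by
  ext a
  constructor
  · rintro ⟨g, hg, rfl⟩
    exact hg.1
  · intro ha
    exact ⟨(a, 1), ⟨ha, T.one_mem⟩, rfl⟩

theorem map_snd_subgroup_prod (S : Subgroup A) (T : Subgroup B) :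
    (S.prod T).map (MonoidHom.snd A B) = T := by
  ext b
  constructor
  · rintro ⟨g, hg, rfl⟩
    exact hg.2
  · intro hb
    exact ⟨(1, b), ⟨S.one_mem, hb⟩, rfl⟩

theorem eq_goursatFst_prod_goursatSnd_iff {G N : Subgroup (A × B)} :
    N = G.goursatFst.prod G.goursatSnd ↔
      ∀ g : A × B, g ∈ N ↔ (g.1, (1 : B)) ∈ G ∧ ((1 : A), g.2) ∈ G := by
  simp only [SetLike.ext_iff, Subgroup.mem_prod, Subgroup.mem_goursatFst, Subgroup.mem_goursatSnd]

end ProductSubgroups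

section GoursatMap

variable {A B : Type*} [Group A] [Group B] (G N : Subgroup (A × B))
  [((N.map (MonoidHom.fst A B)).subgroupOf (G.map (MonoidHom.fst A B))).Normal]
  [((N.map (MonoidHom.snd A B)).subgroupOf (G.map (MonoidHom.snd A B))).Normal]

theorem ker_goursatMap :
    (goursatMap G N).ker =
      ((N.map (MonoidHom.fst A B)).prod (N.map (MonoidHom.snd A B))).subgroupOf G := by
  rw [goursatMap, MonoidHom.ker_prod, ← MonoidHom.comap_ker, ← MonoidHom.comap_ker,
    QuotientGroup.ker_mk', QuotientGroup.ker_mk']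
  rfl

theorem ker_goursatMap_of_eq_prod {S : Subgroup A} {T : Subgroup B} (hN : N = S.prod T) :
    (goursatMap G N).ker = N.subgroupOf G := by
  rw [ker_goursatMap]
  simp only [hN, map_fst_subgroup_prod, map_snd_subgroup_prod]

theorem stmt4_general [(N.subgroupOf G).Normal]
    {S : Subgroup A} {T : Subgroup B} (hN : N = S.prod T) :
    (goursatMap G N).ker = N.subgroupOf G ∧
    ∃ e : (↥G ⧸ N.subgroupOf G) ≃* (goursatMap G N).range,
      ∀ g : G, (e (QuotientGroup.mk g)).val = goursatMap G N g := by
  have hker : (goursatMap G N).ker = N.subgroupOf G := ker_goursatMap_of_eq_prod G N hN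
  have hker' : N.subgroupOf G = (goursatMap G N).rangeRestrict.ker := by
    rw [MonoidHom.ker_rangeRestrict, hker]
  exact ⟨hker, QuotientGroup.liftEquiv _ (goursatMap G N).rangeRestrict_surjective hker',
    fun _ ↦ rfl⟩

end GoursatMap

/-- with `N = S_A × S_B`, the map `φ : G → (G_A/N_A) × (G_B/N_B)`
has kernel `N`, hence induces an isomorphism of `G/N` onto its image
`H = {([a],[b]) : (a,b) ∈ G}` (the range of `φ`). -/
theorem stmt4 {A B : Type*} [Group A] [Group B] (G N : Subgroup (A × B))
    (hN : ∀ g : A × B, g ∈ N ↔ (g.1, (1 : B)) ∈ G ∧ ((1 : A), g.2) ∈ G)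
    [((N.map (MonoidHom.fst A B)).subgroupOf (G.map (MonoidHom.fst A B))).Normal]
    [((N.map (MonoidHom.snd A B)).subgroupOf (G.map (MonoidHom.snd A B))).Normal]
    [(N.subgroupOf G).Normal] :
    (goursatMap G N).ker = N.subgroupOf G ∧
    Nonempty ((↥G ⧸ N.subgroupOf G) ≃* (goursatMap G N).range) := by
  obtain ⟨hker, e, -⟩ := stmt4_general G N (eq_goursatFst_prod_goursatSnd_iff.mpr hN)
  exact ⟨hker, ⟨e⟩⟩
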